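/- arXiv:1503.02148 — 5 statements merged into one kernel-verified Lean document; each statement's English description precedes it below -/
import Mathlib

section
/- Let x ∈ ℝ, δ > 0 and β ∈ (0,1]. Suppose f : ℝ → ℝ is continuous on [x, x+δ], differentiable on the open interval (x, x+δ), and that the limit lim_{ε→0⁺} (1/β)·ε^{1−β}·f′(x+ε) = L exists. Then the forward fractional velocity of f at x of order β exists and equals L, i.e. lim_{ε→0⁺} (f(x+ε) − f(x))/ε^β = L. -/
open Filter Topology Set

/-!
L'Hôpital's rule for the increment `f (x + ε) - f x` over `ε ^ β`: the quotient of the derivatives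
is `f' (x + ε) / (β * ε ^ (β - 1)) = 1 / β * ε ^ (1 - β) * f' (x + ε)`.
-/

lemma div_mul_rpow_sub_one {t : ℝ} (ht : 0 ≤ t) (β a : ℝ) :
    a / (β * t ^ (β - 1)) = 1 / β * t ^ (1 - β) * a := by
  rw [← neg_sub β 1, Real.rpow_neg ht, div_eq_mul_inv, mul_inv, one_div, mul_comm]

section

variable {β : ℝ} {l : Filter ℝ}

lemma tendsto_div_rpow_nhdsGT_zero_of_hasDerivAt {g g' : ℝ → ℝ} (hβ : 0 < β)
    (hderiv : ∀ᶠ t in 𝓝[>] 0, HasDerivAt g (g' t) t) (hg : Tendsto g (𝓝[>] 0) (𝓝 0))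
    (hlim : Tendsto (fun t => 1 / β * t ^ (1 - β) * g' t) (𝓝[>] 0) l) :
    Tendsto (fun t => g t / t ^ β) (𝓝[>] 0) l := by
  have hpos : ∀ᶠ t : ℝ in 𝓝[>] 0, 0 < t := self_mem_nhdsWithin
  have hpow : ∀ᶠ t : ℝ in 𝓝[>] 0, HasDerivAt (· ^ β) (β * t ^ (β - 1)) t :=
    hpos.mono fun t ht => Real.hasDerivAt_rpow_const (.inl ht.ne')
  have hpow_ne : ∀ᶠ t : ℝ in 𝓝[>] 0, β * t ^ (β - 1) ≠ 0 :=
    hpos.mono fun t ht => (mul_pos hβ (Real.rpow_pos_of_pos ht _)).ne'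
  have hpow_zero : Tendsto (fun t : ℝ => t ^ β) (𝓝[>] 0) (𝓝 0) :=
    ((Real.continuous_rpow_const hβ.le).tendsto' 0 0 (Real.zero_rpow hβ.ne')).mono_left
      nhdsWithin_le_nhds
  refine HasDerivAt.lhopital_zero_nhdsGT hderiv hpow hpow_ne hg hpow_zero ?_
  exact hlim.congr' (hpos.mono fun t ht => (div_mul_rpow_sub_one ht.le β (g' t)).symm)

theorem fractional_velocity_of_deriv_limit_general {f f' : ℝ → ℝ} {x : ℝ} (hβ : 0 < β)
    (hcont : ContinuousWithinAt f (Ioi x) x)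
    (hderiv : ∀ᶠ t in 𝓝[>] x, HasDerivAt f (f' t) t)
    (hlim : Tendsto (fun ε => 1 / β * ε ^ (1 - β) * f' (x + ε)) (𝓝[>] 0) l) :
    Tendsto (fun ε => (f (x + ε) - f x) / ε ^ β) (𝓝[>] 0) l := by
  have hshift : Tendsto (x + ·) (𝓝[>] 0) (𝓝[>] x) := by
    simpa only [Tendsto, add_zero] using (map_add_left_nhdsGT (c := x) (a := 0)).le
  have hincr_deriv : ∀ᶠ ε in 𝓝[>] 0, HasDerivAt (fun ε => f (x + ε) - f x) (f' (x + ε)) ε :=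
    (hshift.eventually hderiv).mono fun ε hε => (hε.comp_const_add x ε).sub_const (f x)
  have hincr_zero : Tendsto (fun ε => f (x + ε) - f x) (𝓝[>] 0) (𝓝 0) :=
    tendsto_sub_nhds_zero_iff.2 (hcont.tendsto.comp hshift)
  exact tendsto_div_rpow_nhdsGT_zero_of_hasDerivAt hβ hincr_deriv hincr_zero hlim

end

/-- Forward fractional velocity via limiting ordinary derivative:
if `f` is continuous on `[x, x+δ]`, differentiable on `(x, x+δ)` and
`(1/β)·ε^(1-β)·f'(x+ε) → L` as `ε → 0⁺`, then
`(f(x+ε) - f(x))/ε^β → L` as `ε → 0⁺`. -/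
theorem fractional_velocity_of_deriv_limit
    (f : ℝ → ℝ) (x δ β L : ℝ) (hδ : 0 < δ) (hβ0 : 0 < β) (hβ1 : β ≤ 1)
    (hcont : ContinuousOn f (Set.Icc x (x + δ)))
    (hdiff : ∀ t ∈ Set.Ioo x (x + δ), DifferentiableAt ℝ f t)
    (hlim : Tendsto (fun ε : ℝ => (1 / β) * ε ^ (1 - β) * deriv f (x + ε))
      (𝓝[>] (0 : ℝ)) (𝓝 L)) :
    Tendsto (fun ε : ℝ => (f (x + ε) - f x) / ε ^ β) (𝓝[>] (0 : ℝ)) (𝓝 L) := by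
  have hx : x < x + δ := lt_add_of_pos_right x hδ
  exact fractional_velocity_of_deriv_limit_general hβ0
    ((hcont x (left_mem_Icc.2 hx.le)).mono_of_mem_nhdsWithin (Icc_mem_nhdsGT hx))
    (eventually_of_mem (Ioo_mem_nhdsGT hx) fun t ht => (hdiff t ht).hasDerivAt) hlim
end

section
/- Let f : ℝ → ℝ, x ∈ ℝ, β > 0 and δ > 0. Suppose f is monotone on [x, x+δ] (either monotone nondecreasing on [x,x+δ] or monotone nonincreasing on [x,x+δ]) and that the forward fractional velocity of f at x of order β exists and equals L, i.e. lim_{ε→0⁺} (f(x+ε) − f(x))/ε^β = L. Then lim_{ε→0⁺} (sup_{[x,x+ε]} f − inf_{[x,x+ε]} f)/ε^β = |L|. -/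
open Filter Topology Set

/-!
A monotone function attains its extrema over `[x, x + ε]` at the endpoints, so its oscillation
there is `|f (x + ε) - f x|`. For small `ε > 0` the oscillation quotient is therefore the absolute
value of the velocity quotient, and the limit follows from the continuity of `|·|`.
-/

theorem sSup_sub_sInf_image_Icc_eq_abs {α R : Type*} [Preorder α] [ConditionallyCompleteLattice R]
    [AddCommGroup R] [IsOrderedAddMonoid R] {f : α → R} {a b : α} (hab : a ≤ b)
    (hf : MonotoneOn f (Icc a b) ∨ AntitoneOn f (Icc a b)) :
    sSup (f '' Icc a b) - sInf (f '' Icc a b) = |f b - f a| := by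
  have ha : a ∈ Icc a b := left_mem_Icc.2 hab
  have hb : b ∈ Icc a b := right_mem_Icc.2 hab
  rcases hf with hf | hf
  · rw [hf.sSup_image_Icc hab, hf.sInf_image_Icc hab, abs_of_nonneg (sub_nonneg.2 (hf ha hb hab))]
  · rw [hf.sSup_image_Icc hab, hf.sInf_image_Icc hab, abs_sub_comm,
      abs_of_nonneg (sub_nonneg.2 (hf ha hb hab))]

theorem oscillation_quotient_tendsto_abs_general {α : Type*} [AddZeroClass α] [LinearOrder α]
    [AddLeftMono α] [TopologicalSpace α] [OrderClosedTopology α]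
    {f : α → ℝ} {w : α → ℝ} {x δ : α} {L : ℝ} (hδ : 0 < δ)
    (hmono : MonotoneOn f (Icc x (x + δ)) ∨ AntitoneOn f (Icc x (x + δ)))
    (hw : ∀ᶠ ε in 𝓝[>] 0, 0 < w ε)
    (hvel : Tendsto (fun ε => (f (x + ε) - f x) / w ε) (𝓝[>] 0) (𝓝 L)) :
    Tendsto (fun ε => (sSup (f '' Icc x (x + ε)) - sInf (f '' Icc x (x + ε))) / w ε)
      (𝓝[>] 0) (𝓝 |L|) := by
  refine hvel.abs.congr' ?_
  filter_upwards [Ioo_mem_nhdsGT hδ, hw] with ε ⟨hε, hεδ⟩ hwε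
  have hsub : Icc x (x + ε) ⊆ Icc x (x + δ) := Icc_subset_Icc_right (by gcongr)
  have hosc : sSup (f '' Icc x (x + ε)) - sInf (f '' Icc x (x + ε)) = |f (x + ε) - f x| :=
    sSup_sub_sInf_image_Icc_eq_abs (le_add_of_nonneg_right hε.le)
      (hmono.imp (·.mono hsub) (·.mono hsub))
  rw [hosc, abs_div, abs_of_pos hwε]

/-- Limit of the oscillatory quotient: if `f` is monotone on `[x, x+δ]` and the
forward fractional velocity of order `β` at `x` equals `L`, then
`(sup_{[x,x+ε]} f - inf_{[x,x+ε]} f)/ε^β → |L|` as `ε → 0⁺`. -/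
theorem oscillation_quotient_tendsto_abs
    (f : ℝ → ℝ) (x β δ L : ℝ) (hβ : 0 < β) (hδ : 0 < δ)
    (hmono : MonotoneOn f (Set.Icc x (x + δ)) ∨ AntitoneOn f (Set.Icc x (x + δ)))
    (hvel : Tendsto (fun ε : ℝ => (f (x + ε) - f x) / ε ^ β) (𝓝[>] (0 : ℝ)) (𝓝 L)) :
    Tendsto (fun ε : ℝ =>
        (sSup (f '' Set.Icc x (x + ε)) - sInf (f '' Set.Icc x (x + ε))) / ε ^ β)
      (𝓝[>] (0 : ℝ)) (𝓝 |L|) :=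
  oscillation_quotient_tendsto_abs_general hδ hmono
    (eventually_mem_nhdsWithin.mono fun _ hε => Real.rpow_pos_of_pos hε β) hvel
end

section
/- Let f, g : ℝ → ℝ, x ∈ ℝ, δ > 0 and β ∈ (0,1]. Suppose f and g are continuous on [x, x+δ], differentiable on the open interval (x, x+δ), and that the limit lim_{ε→0⁺} (1/β)·ε^{1−β}·( f′(x+ε)·(g(x+ε) − g(x)) + g′(x+ε)·(f(x+ε) − f(x)) ) = L exists. Then the forward fractional co-variation of f and g at x of order β exists and equals L, i.e. lim_{ε→0⁺} (f(x+ε) − f(x))·(g(x+ε) − g(x))/ε^β = L. -/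
open Filter Topology Set

/-!
The increments of `f` and `g` at `x` have a product that is differentiable in `ε > 0` and tends to
`0` with `ε`. Since `ε ^ β` also tends to `0` and has derivative `β * ε ^ (β - 1) ≠ 0`, L'Hôpital's
rule applies to their quotient, and the expression whose limit is assumed is exactly the quotient
of the derivatives.
-/

theorem tendsto_div_rpow_of_hasDerivAt {F F' : ℝ → ℝ} {β : ℝ} {l : Filter ℝ} (hβ : 0 < β)
    (hF' : ∀ᶠ ε in 𝓝[>] 0, HasDerivAt F (F' ε) ε) (hF : Tendsto F (𝓝[>] 0) (𝓝 0))
    (hlim : Tendsto (fun ε => 1 / β * ε ^ (1 - β) * F' ε) (𝓝[>] 0) l) :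
    Tendsto (fun ε => F ε / ε ^ β) (𝓝[>] 0) l := by
  have hpos : ∀ᶠ ε : ℝ in 𝓝[>] 0, 0 < ε := self_mem_nhdsWithin
  have hpow : Tendsto (fun ε : ℝ => ε ^ β) (𝓝[>] 0) (𝓝 0) := by
    simpa only [Real.zero_rpow hβ.ne'] using
      (Real.continuous_rpow_const hβ.le).continuousWithinAt.tendsto (x := (0 : ℝ))
  have hquot : ∀ ε > 0, 1 / β * ε ^ (1 - β) * F' ε = F' ε / (β * ε ^ (β - 1)) := fun ε hε => by
    rw [← neg_sub β 1, Real.rpow_neg hε.le]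
    ring
  exact HasDerivAt.lhopital_zero_nhdsGT hF'
    (hpos.mono fun ε hε => Real.hasDerivAt_rpow_const (Or.inl hε.ne'))
    (hpos.mono fun ε hε => (mul_pos hβ (Real.rpow_pos_of_pos hε _)).ne')
    hF hpow (hlim.congr' (hpos.mono hquot))

section Increments

variable {H : Type*} [AddCommGroup H] [PartialOrder H] [IsOrderedAddMonoid H]
  [TopologicalSpace H] [ContinuousAdd H]

theorem tendsto_const_add_nhdsGT_zero (x : H) : Tendsto (fun ε => x + ε) (𝓝[>] 0) (𝓝[>] x) := by
  simp only [Tendsto, map_add_left_nhdsGT, add_zero, le_refl]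

theorem tendsto_fwdDiff_nhdsGT_zero {G : Type*} [AddCommGroup G] [TopologicalSpace G]
    [ContinuousSub G] {f : H → G} {x : H} (hf : ContinuousWithinAt f (Ioi x) x) :
    Tendsto (fun ε => fwdDiff ε f x) (𝓝[>] 0) (𝓝 0) := by
  simpa only [sub_self] using! (hf.tendsto.comp (tendsto_const_add_nhdsGT_zero x)).sub_const (f x)

end Increments

theorem hasDerivAt_fwdDiff_mul_fwdDiff {𝕜 A : Type*} [NontriviallyNormedField 𝕜]
    [NormedCommRing A] [NormedAlgebra 𝕜 A] {f g : 𝕜 → A} {f' g' : A} {x ε : 𝕜}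
    (hf : HasDerivAt f f' (x + ε)) (hg : HasDerivAt g g' (x + ε)) :
    HasDerivAt (fun ε => fwdDiff ε f x * fwdDiff ε g x)
      (f' * fwdDiff ε g x + g' * fwdDiff ε f x) ε := by
  rw [mul_comm g']
  exact ((hf.comp_const_add x ε).sub_const (f x)).mul ((hg.comp_const_add x ε).sub_const (g x))

theorem covariation_of_deriv_limit_general {f g : ℝ → ℝ} {x β : ℝ} {l : Filter ℝ} (hβ : 0 < β)
    (hfc : ContinuousWithinAt f (Ioi x) x) (hgc : ContinuousWithinAt g (Ioi x) x)
    (hfd : ∀ᶠ t in 𝓝[>] x, DifferentiableAt ℝ f t)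
    (hgd : ∀ᶠ t in 𝓝[>] x, DifferentiableAt ℝ g t)
    (hlim : Tendsto (fun ε : ℝ => 1 / β * ε ^ (1 - β) *
        (deriv f (x + ε) * (g (x + ε) - g x) + deriv g (x + ε) * (f (x + ε) - f x)))
      (𝓝[>] 0) l) :
    Tendsto (fun ε : ℝ => (f (x + ε) - f x) * (g (x + ε) - g x) / ε ^ β) (𝓝[>] 0) l := by
  have hderiv : ∀ᶠ ε in 𝓝[>] 0, HasDerivAt (fun ε => fwdDiff ε f x * fwdDiff ε g x)
      (deriv f (x + ε) * fwdDiff ε g x + deriv g (x + ε) * fwdDiff ε f x) ε :=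
    ((tendsto_const_add_nhdsGT_zero x).eventually (hfd.and hgd)).mono fun _ ⟨hf, hg⟩ =>
      hasDerivAt_fwdDiff_mul_fwdDiff hf.hasDerivAt hg.hasDerivAt
  have hzero : Tendsto (fun ε => fwdDiff ε f x * fwdDiff ε g x) (𝓝[>] 0) (𝓝 0) := by
    simpa only [mul_zero] using
      (tendsto_fwdDiff_nhdsGT_zero hfc).mul (tendsto_fwdDiff_nhdsGT_zero hgc)
  exact tendsto_div_rpow_of_hasDerivAt hβ hderiv hzero hlim

/-- Limiting case of the fractional co-variation: if `f, g` are continuous on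
`[x, x+δ]`, differentiable on `(x, x+δ)`, and
`(1/β)·ε^(1-β)·(f'(x+ε)·(g(x+ε)-g(x)) + g'(x+ε)·(f(x+ε)-f(x))) → L` as `ε → 0⁺`,
then the forward fractional co-variation of `f` and `g` at `x` of order `β`
exists and equals `L`. -/
theorem covariation_of_deriv_limit
    (f g : ℝ → ℝ) (x δ β L : ℝ) (hδ : 0 < δ) (hβ0 : 0 < β) (hβ1 : β ≤ 1)
    (hfc : ContinuousOn f (Set.Icc x (x + δ)))
    (hgc : ContinuousOn g (Set.Icc x (x + δ)))
    (hfd : ∀ t ∈ Set.Ioo x (x + δ), DifferentiableAt ℝ f t)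
    (hgd : ∀ t ∈ Set.Ioo x (x + δ), DifferentiableAt ℝ g t)
    (hlim : Tendsto (fun ε : ℝ => (1 / β) * ε ^ (1 - β) *
        (deriv f (x + ε) * (g (x + ε) - g x) + deriv g (x + ε) * (f (x + ε) - f x)))
      (𝓝[>] (0 : ℝ)) (𝓝 L)) :
    Tendsto (fun ε : ℝ => (f (x + ε) - f x) * (g (x + ε) - g x) / ε ^ β)
      (𝓝[>] (0 : ℝ)) (𝓝 L) := by
  have hx : x < x + δ := lt_add_of_pos_right x hδ
  exact covariation_of_deriv_limit_general hβ0
    ((hfc x (left_mem_Icc.2 hx.le)).mono_of_mem_nhdsWithin (Icc_mem_nhdsGT hx))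
    ((hgc x (left_mem_Icc.2 hx.le)).mono_of_mem_nhdsWithin (Icc_mem_nhdsGT hx))
    (mem_of_superset (Ioo_mem_nhdsGT hx) hfd) (mem_of_superset (Ioo_mem_nhdsGT hx) hgd) hlim
end

section
/- Let f, g : ℝ → ℝ, x ∈ ℝ and β > 0. Suppose the forward fractional velocity of f at x of order β exists and equals L_f, the forward fractional velocity of g at x of order β exists and equals L_g, and the forward fractional co-variation of f and g at x of order β exists and equals L. Then the forward fractional velocity of the product f·g at x of order β exists and equals L_f·g(x) + L_g·f(x) + L. -/
open Filter Topology

/-!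
Expanding the increment of a product around the base values `a = f x`, `b = g x` gives
`uv - ab = (u - a)b + a(v - b) + (u - a)(v - b)`. After scaling, the last term, which vanishes in
the limit for the classical derivative, tends to the co-variation.
-/

theorem mul_sub_mul_eq_sub_mul_add_mul_sub_add_sub_mul_sub {A : Type*}
    [NonUnitalNonAssocRing A] (u v a b : A) :
    u * v - a * b = (u - a) * b + a * (v - b) + (u - a) * (v - b) := by
  simp only [mul_sub, sub_mul]
  abel

/- The scalars `c i` play the role of `(ε ^ β)⁻¹`; scaling instead of dividing leaves no
junk value at a zero denominator and makes sense for values in a noncommutative algebra. -/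
theorem forward_fractional_velocity_product_rule_general {ι R A : Type*}
    [NonUnitalNonAssocRing A] [DistribSMul R A] [IsScalarTower R A A] [SMulCommClass R A A]
    [TopologicalSpace A] [ContinuousAdd A] [SeparatelyContinuousMul A]
    {l : Filter ι} {c : ι → R} {u v : ι → A} {a b Lu Lv L : A}
    (hu : Tendsto (fun i => c i • (u i - a)) l (𝓝 Lu))
    (hv : Tendsto (fun i => c i • (v i - b)) l (𝓝 Lv))
    (huv : Tendsto (fun i => c i • ((u i - a) * (v i - b))) l (𝓝 L)) :
    Tendsto (fun i => c i • (u i * v i - a * b)) l (𝓝 (Lu * b + a * Lv + L)) := by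
  simpa only [mul_sub_mul_eq_sub_mul_add_mul_sub_add_sub_mul_sub,
    smul_add, smul_mul_assoc, mul_smul_comm]
    using ((hu.mul_const b).add (hv.const_mul a)).add huv

/-- Product rule for the forward fractional velocity:
`D⁺_β[f g](x) = D⁺_β[f](x)·g(x) + D⁺_β[g](x)·f(x) + [f,g]⁺_β(x)`. -/
theorem forward_fractional_velocity_product_rule
    (f g : ℝ → ℝ) (x β Lf Lg L : ℝ) (hβ : 0 < β)
    (hf : Tendsto (fun ε : ℝ => (f (x + ε) - f x) / ε ^ β) (𝓝[>] (0 : ℝ)) (𝓝 Lf))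
    (hg : Tendsto (fun ε : ℝ => (g (x + ε) - g x) / ε ^ β) (𝓝[>] (0 : ℝ)) (𝓝 Lg))
    (hfg : Tendsto (fun ε : ℝ => (f (x + ε) - f x) * (g (x + ε) - g x) / ε ^ β)
      (𝓝[>] (0 : ℝ)) (𝓝 L)) :
    Tendsto (fun ε : ℝ => (f (x + ε) * g (x + ε) - f x * g x) / ε ^ β)
      (𝓝[>] (0 : ℝ)) (𝓝 (Lf * g x + Lg * f x + L)) := by
  simp only [div_eq_inv_mul] at hf hg hfg ⊢
  simpa only [smul_eq_mul, mul_comm (f x) Lg] using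
    forward_fractional_velocity_product_rule_general (c := fun ε : ℝ => (ε ^ β)⁻¹) hf hg hfg
end

section
/- Let g : ℝ → ℝ, x ∈ ℝ and β > 0. Suppose g is continuous at x, g(x) ≠ 0, and the forward fractional velocity of g at x of order β exists and equals L. Then the forward fractional velocity of the reciprocal function 1/g (the function t ↦ 1/g(t)) at x of order β exists and equals −L/g(x)². -/
/-!
With `u = g (x + ε)`, `a = g x` and `φ = ε ^ β`, the identity
`u⁻¹ - a⁻¹ = -(u⁻¹ * (u - a) * a⁻¹)` gives `(u⁻¹ - a⁻¹) / φ = -(u⁻¹ * ((u - a) / φ) * a⁻¹)`.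
Here `u⁻¹` tends to `a⁻¹`, since in `u - a = φ * ((u - a) / φ)` the second factor converges and
`φ` tends to `0`.
-/

open Filter Topology

section Limits

variable {α : Type*} {l : Filter α}

theorem tendsto_of_tendsto_inv_smul_sub {𝕜 E : Type*}
    [DivisionRing 𝕜] [TopologicalSpace 𝕜]
    [AddCommGroup E] [TopologicalSpace E] [ContinuousAdd E] [Module 𝕜 E] [ContinuousSMul 𝕜 E]
    {φ : α → 𝕜} {u : α → E} {a v : E}
    (hφ : Tendsto φ l (𝓝 0)) (hφ_ne : ∀ᶠ t in l, φ t ≠ 0)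
    (hu : Tendsto (fun t => (φ t)⁻¹ • (u t - a)) l (𝓝 v)) :
    Tendsto u l (𝓝 a) := by
  have h : Tendsto (fun t => φ t • (φ t)⁻¹ • (u t - a) + a) l (𝓝 a) := by
    simpa only [zero_smul, zero_add] using (hφ.smul hu).add_const a
  refine h.congr' ?_
  filter_upwards [hφ_ne] with t ht
  rw [smul_inv_smul₀ ht, sub_add_cancel]

theorem tendsto_smul_inv_sub_inv {R 𝕜 : Type*}
    [DivisionRing 𝕜] [TopologicalSpace 𝕜] [IsTopologicalDivisionRing 𝕜] [T1Space 𝕜]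
    [SMul R 𝕜] [IsScalarTower R 𝕜 𝕜] [SMulCommClass R 𝕜 𝕜]
    {c : α → R} {u : α → 𝕜} {a v : 𝕜} (ha : a ≠ 0) (hu : Tendsto u l (𝓝 a))
    (hv : Tendsto (fun t => c t • (u t - a)) l (𝓝 v)) :
    Tendsto (fun t => c t • ((u t)⁻¹ - a⁻¹)) l (𝓝 (-(a⁻¹ * v * a⁻¹))) := by
  have h : Tendsto (fun t => (u t)⁻¹ * (c t • (u t - a)) * -a⁻¹) l (𝓝 (-(a⁻¹ * v * a⁻¹))) := by
    simpa only [mul_neg] using ((hu.inv₀ ha).mul hv).mul_const (-a⁻¹)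
  refine h.congr' ?_
  filter_upwards [hu.eventually_ne ha] with t ht
  rw [mul_smul_comm, smul_mul_assoc, inv_sub_inv' ht ha, ← neg_sub (u t) a]
  simp only [mul_neg, neg_mul]

end Limits

/-- `g` has forward fractional velocity `v` of order `β` at `x`. As for `slope`, the quotient by
`ε ^ β` is encoded as scalar multiplication by its inverse, so that `g` may be vector-valued. -/
def HasForwardFractionalVelocity {E : Type*} [AddCommGroup E] [Module ℝ E] [TopologicalSpace E]
    (β : ℝ) (g : ℝ → E) (v : E) (x : ℝ) : Prop :=
  Tendsto (fun ε : ℝ => (ε ^ β)⁻¹ • (g (x + ε) - g x)) (𝓝[>] 0) (𝓝 v)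

theorem hasForwardFractionalVelocity_iff_tendsto_div {β : ℝ} {g : ℝ → ℝ} {v x : ℝ} :
    HasForwardFractionalVelocity β g v x ↔
      Tendsto (fun ε : ℝ => (g (x + ε) - g x) / ε ^ β) (𝓝[>] 0) (𝓝 v) := by
  simp only [HasForwardFractionalVelocity, smul_eq_mul, div_eq_inv_mul]

theorem tendsto_rpow_nhdsGT_zero {β : ℝ} (hβ : 0 < β) :
    Tendsto (fun ε : ℝ => ε ^ β) (𝓝[>] 0) (𝓝 0) := by
  simpa only [Real.zero_rpow hβ.ne'] using
    (Real.continuousAt_rpow_const 0 β (.inr hβ.le)).tendsto.mono_left nhdsWithin_le_nhds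

theorem HasForwardFractionalVelocity.tendsto_add_nhdsGT_zero {E : Type*}
    [AddCommGroup E] [Module ℝ E] [TopologicalSpace E] [ContinuousAdd E] [ContinuousSMul ℝ E]
    {β : ℝ} {g : ℝ → E} {v : E} {x : ℝ}
    (hg : HasForwardFractionalVelocity β g v x) (hβ : 0 < β) :
    Tendsto (fun ε => g (x + ε)) (𝓝[>] 0) (𝓝 (g x)) := by
  refine tendsto_of_tendsto_inv_smul_sub (tendsto_rpow_nhdsGT_zero hβ) ?_ hg
  filter_upwards [self_mem_nhdsWithin] with ε hε
  exact (Real.rpow_pos_of_pos hε β).ne'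

theorem forward_fractional_velocity_inv_general {𝕜 : Type*}
    [DivisionRing 𝕜] [Algebra ℝ 𝕜] [TopologicalSpace 𝕜] [IsTopologicalDivisionRing 𝕜]
    [T1Space 𝕜] [ContinuousSMul ℝ 𝕜] {β : ℝ} {g : ℝ → 𝕜} {v : 𝕜} {x : ℝ}
    (hβ : 0 < β) (hgx : g x ≠ 0) (hg : HasForwardFractionalVelocity β g v x) :
    HasForwardFractionalVelocity β g⁻¹ (-((g x)⁻¹ * v * (g x)⁻¹)) x :=
  tendsto_smul_inv_sub_inv hgx (hg.tendsto_add_nhdsGT_zero hβ) hg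

/-- Forward fractional velocity of a reciprocal:
if `g` is continuous at `x`, `g(x) ≠ 0` and `D⁺_β[g](x) = L`, then
`D⁺_β[1/g](x) = -L/g(x)²`. -/
theorem forward_fractional_velocity_inv
    (g : ℝ → ℝ) (x β L : ℝ) (hβ : 0 < β)
    (hgc : ContinuousAt g x) (hgx : g x ≠ 0)
    (hg : Tendsto (fun ε : ℝ => (g (x + ε) - g x) / ε ^ β) (𝓝[>] (0 : ℝ)) (𝓝 L)) :
    Tendsto (fun ε : ℝ => (1 / g (x + ε) - 1 / g x) / ε ^ β)
      (𝓝[>] (0 : ℝ)) (𝓝 (-L / g x ^ 2)) := by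
  convert hasForwardFractionalVelocity_iff_tendsto_div.mp <| forward_fractional_velocity_inv_general
    hβ hgx (hasForwardFractionalVelocity_iff_tendsto_div.mpr hg) using 2 <;> simp [field]
end
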